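/- Let a ∈ 𝔻. The map h ↦ h ∘ φ_{ω_a} restricts to a bounded linear bijection from the closed subspace of even functions in H² onto N(C_a − 1), and to a bounded linear bijection from the closed subspace of odd functions in H² onto N(C_a + 1); in both cases the inverse map is f ↦ f ∘ φ_{ω_a}. -/

import Mathlib

/-!
Write `w = ω_a`. Since `a = 2w/(1 + |w|²)`, the involution `φ_w` conjugates `φ_a` to `z ↦ -z`:
`φ_w (φ_a z) = -φ_w z`. Hence composition with the involution `φ_w` exchanges even (odd) functions
with functions (anti-)invariant under `φ_a`, and it only remains to see that `f ↦ f ∘ φ_w` is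
bounded on `H²`.

For this, identify `H²` with `ℓ²(ℕ)`, where evaluation at `z` is the inner product with the
reproducing kernel `k_z`. Let `S` be the unilateral shift. Because `S` is an isometry,
`‖(w - S) y‖ = ‖(1 - w̄ S) y‖` for all `y`, so `T = (w - S)(1 - w̄ S)⁻¹` (multiplication by `φ_w`) is
an isometry. As `φ_w(w) = 0`, the vectors `T^n k_w / ‖k_w‖` are orthonormal, and they define
an isometry `W` of `ℓ²` which is `f ↦ (f ∘ φ_w) · k_w / ‖k_w‖`. Since `k_w(z) = 1/(1 - w̄ z)`, the
bounded operator `‖k_w‖ (1 - w̄ S) W` is composition with `φ_w`.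
-/

/-- The Möbius involution `φ_a(z) = (a - z)/(1 - conj a · z)`. -/
noncomputable def phi (a z : ℂ) : ℂ := (a - z) / (1 - (starRingEnd ℂ) a * z)

/-- The fixed point `ω_a` of `φ_a` in the open unit disk. -/
noncomputable def omegaPt (a : ℂ) : ℂ :=
  if a = 0 then 0 else (1 - (Real.sqrt (1 - ‖a‖ ^ 2) : ℂ)) / (starRingEnd ℂ) a

/-- `f` belongs to the Hardy space `H²` of the disk, with Taylor coefficients `c`. -/
def IsH2Rep (f : ℂ → ℂ) (c : ℕ → ℂ) : Prop :=
  Summable (fun n => ‖c n‖ ^ 2) ∧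
    ∀ z : ℂ, ‖z‖ < 1 → HasSum (fun n => c n * z ^ n) (f z)

/-- Membership in the Hardy space `H²` of the disk. -/
def MemH2 (f : ℂ → ℂ) : Prop := ∃ c : ℕ → ℂ, IsH2Rep f c

open Filter Topology

/-! ### The coefficient space and point evaluations -/

/-- The sequence space `ℓ²(ℕ)`, viewed as the space of Taylor coefficients of `H²`. -/
noncomputable abbrev Ell2 := lp (fun _ : ℕ => ℂ) 2

lemma HasSum.congr_terms {f g : ℕ → ℂ} {s : ℂ} (hf : HasSum f s) (h : ∀ n, f n = g n) :
    HasSum g s := funext h ▸ hf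

lemma memlp_two_iff (c : ℕ → ℂ) : Memℓp c 2 ↔ Summable (fun n => ‖c n‖ ^ 2) := by
  rw [memℓp_gen_iff (by norm_num)]
  simp

lemma ell2_summable (x : Ell2) : Summable (fun n => ‖x n‖ ^ 2) :=
  (memlp_two_iff _).1 (lp.memℓp x)

lemma ell2_norm_sq (x : Ell2) : ‖x‖ ^ 2 = ∑' n, ‖x n‖ ^ 2 := by
  have := lp.norm_rpow_eq_tsum (p := 2) (by norm_num) x
  simpa using this

lemma kern_mem {z : ℂ} (hz : ‖z‖ < 1) :
    Memℓp (fun n : ℕ => (starRingEnd ℂ) z ^ n) 2 := by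
  rw [memlp_two_iff]
  have h : ‖z‖ ^ 2 < 1 := by nlinarith [norm_nonneg z]
  refine (summable_geometric_of_lt_one (by positivity) h).congr fun n => ?_
  simp [← pow_mul, mul_comm]

/-- The Szegő (reproducing) kernel `k_z`, with Taylor coefficients `z̄ ^ n`. -/
noncomputable def kern {z : ℂ} (hz : ‖z‖ < 1) : Ell2 := ⟨_, kern_mem hz⟩

/-- Evaluation at a point `z` of the disk of the function with given Taylor coefficients,
as a continuous functional on `ℓ²`. -/
noncomputable def ev {z : ℂ} (hz : ‖z‖ < 1) : Ell2 →L[ℂ] ℂ := innerSL ℂ (kern hz)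

lemma ev_eq_inner {z : ℂ} (hz : ‖z‖ < 1) (x : Ell2) : ev hz x = inner ℂ (kern hz) x := rfl

lemma ev_hasSum {z : ℂ} (hz : ‖z‖ < 1) (x : Ell2) : HasSum (fun n => x n * z ^ n) (ev hz x) := by
  have h := lp.hasSum_inner (𝕜 := ℂ) (kern hz) x
  simpa [kern, ev_eq_inner] using h

/-! ### Monomials, orthonormal sequences and the shift -/

/-- The vectors with a single nonzero coefficient `1`: the monomials `z ^ n`. -/
noncomputable def mono (n : ℕ) : Ell2 := lp.single 2 n 1

lemma mono_orthonormal : Orthonormal ℂ mono := by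
  rw [orthonormal_iff_ite]
  intro i j
  simp [mono, lp.inner_single_left, lp.single_apply, Pi.single_apply]

lemma ev_mono {z : ℂ} (hz : ‖z‖ < 1) (n : ℕ) : ev hz (mono n) = z ^ n := by
  rw [ev_eq_inner, mono, lp.inner_single_right]
  simp [kern]

/-- An orthonormal sequence `v` in `ℓ²` gives the isometry `x ↦ ∑ x n • v n`. -/
noncomputable def isoOf {v : ℕ → Ell2} (hv : Orthonormal ℂ v) : Ell2 →ₗᵢ[ℂ] Ell2 :=
  hv.orthogonalFamily.linearIsometry

lemma isoOf_hasSum {v : ℕ → Ell2} (hv : Orthonormal ℂ v) (x : Ell2) :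
    HasSum (fun n => x n • v n) (isoOf hv x) := by
  exact hv.orthogonalFamily.hasSum_linearIsometry x

lemma ev_isoOf {v : ℕ → Ell2} (hv : Orthonormal ℂ v) (x : Ell2) {z : ℂ} (hz : ‖z‖ < 1) :
    HasSum (fun n => x n * ev hz (v n)) (ev hz (isoOf hv x)) := by
  simpa using (isoOf_hasSum hv x).mapL (ev hz)

/-- The unilateral shift on `ℓ²`, i.e. multiplication by `z` on `H²`. -/
noncomputable def shift : Ell2 →ₗᵢ[ℂ] Ell2 :=
  isoOf (v := fun n => mono (n + 1)) (mono_orthonormal.comp _ (add_left_injective 1))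

lemma ev_shift (x : Ell2) {z : ℂ} (hz : ‖z‖ < 1) : ev hz (shift x) = z * ev hz x := by
  have h := ev_isoOf (mono_orthonormal.comp _ (add_left_injective 1)) x hz
  refine (h.congr_terms fun n => ?_).unique ((ev_hasSum hz x).mul_left z)
  rw [Function.comp_apply, ev_mono]
  ring

/-! ### Möbius involutions of the disk -/

lemma one_sub_ne {w z : ℂ} (hw : ‖w‖ < 1) (hz : ‖z‖ < 1) : 1 - (starRingEnd ℂ) w * z ≠ 0 := by
  intro h
  have h1 : (starRingEnd ℂ) w * z = 1 := (sub_eq_zero.1 h).symm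
  have h2 : ‖w‖ * ‖z‖ = 1 := by simpa using congrArg norm h1
  nlinarith [norm_nonneg z, norm_nonneg w]

lemma phi_mul {w z : ℂ} (hw : ‖w‖ < 1) (hz : ‖z‖ < 1) :
    phi w z * (1 - (starRingEnd ℂ) w * z) = w - z := div_mul_cancel₀ _ (one_sub_ne hw hz)

lemma phi_norm_lt {w z : ℂ} (hw : ‖w‖ < 1) (hz : ‖z‖ < 1) : ‖phi w z‖ < 1 := by
  rw [phi, norm_div, div_lt_one (norm_pos_iff.2 (one_sub_ne hw hz))]
  refine lt_of_pow_lt_pow_left₀ 2 (norm_nonneg _) ?_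
  have h1 : ‖w‖ ^ 2 < 1 := by nlinarith [norm_nonneg w]
  have h2 : ‖z‖ ^ 2 < 1 := by nlinarith [norm_nonneg z]
  simp only [← Complex.normSq_eq_norm_sq, Complex.normSq_apply] at h1 h2 ⊢
  simp only [Complex.sub_re, Complex.sub_im, Complex.mul_re, Complex.mul_im, Complex.one_re,
    Complex.one_im, Complex.conj_re, Complex.conj_im]
  nlinarith [mul_pos (sub_pos.2 h1) (sub_pos.2 h2)]

/-! ### Multiplication by a Möbius involution -/

/-- The operator of multiplication by `1 - w̄ z`. -/
noncomputable def denOp (w : ℂ) : Ell2 →L[ℂ] Ell2 :=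
  1 - (starRingEnd ℂ) w • shift.toContinuousLinearMap

lemma denOp_apply (w : ℂ) (x : Ell2) : denOp w x = x - (starRingEnd ℂ) w • shift x := by
  simp [denOp]

lemma ev_denOp (w : ℂ) (x : Ell2) {z : ℂ} (hz : ‖z‖ < 1) :
    ev hz (denOp w x) = (1 - (starRingEnd ℂ) w * z) * ev hz x := by
  rw [denOp_apply, map_sub, map_smul, ev_shift, smul_eq_mul]
  ring

lemma denOp_isUnit {w : ℂ} (hw : ‖w‖ < 1) : IsUnit (denOp w) := by
  refine isUnit_one_sub_of_norm_lt_one ?_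
  rw [norm_smul, RCLike.norm_conj]
  have := shift.norm_toContinuousLinearMap_le
  nlinarith [norm_nonneg w]

/-- Numerator and denominator of `φ_w` have the same modulus on the unit circle; in operator form,
this holds for any isometry in place of `z`. -/
lemma norm_num_eq (w : ℂ) (y : Ell2) : ‖w • y - shift y‖ = ‖denOp w y‖ := by
  rw [denOp_apply, ← sq_eq_sq₀ (norm_nonneg _) (norm_nonneg _), @norm_sub_sq ℂ, @norm_sub_sq ℂ,
    inner_smul_left, inner_smul_right, norm_smul, norm_smul, RCLike.norm_conj, shift.norm_map]
  ring

/-- Multiplication by `φ_w`, for `w` in the disk, is an isometry of `H²`. -/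
lemma exists_mulPhi {w : ℂ} (hw : ‖w‖ < 1) : ∃ T : Ell2 →ₗᵢ[ℂ] Ell2,
    ∀ (x : Ell2) (z : ℂ) (hz : ‖z‖ < 1), ev hz (T x) = phi w z * ev hz x := by
  obtain ⟨U, hU⟩ := denOp_isUnit hw
  have key (x : Ell2) : denOp w ((↑U⁻¹ : Ell2 →L[ℂ] Ell2) x) = x := by
    rw [← hU, ← mul_apply_eq_comp, Units.mul_inv, one_apply_eq_self]
  refine ⟨⟨(((w • 1 - shift.toContinuousLinearMap) * (↑U⁻¹ : Ell2 →L[ℂ] Ell2) :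
    Ell2 →L[ℂ] Ell2) : Ell2 →ₗ[ℂ] Ell2), fun x => ?_⟩, fun x z hz => ?_⟩
  · have := norm_num_eq w ((↑U⁻¹ : Ell2 →L[ℂ] Ell2) x)
    rw [key] at this
    simpa using this
  · have h := ev_denOp w ((↑U⁻¹ : Ell2 →L[ℂ] Ell2) x) hz
    rw [key] at h
    have h2 : ev hz (w • (↑U⁻¹ : Ell2 →L[ℂ] Ell2) x - shift ((↑U⁻¹ : Ell2 →L[ℂ] Ell2) x)) =
        phi w z * ev hz x := by
      rw [h, map_sub, map_smul, ev_shift, smul_eq_mul, phi, ← mul_assoc,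
        div_mul_cancel₀ _ (one_sub_ne hw hz)]
      ring
    simpa using h2

/-- A unit vector orthogonal to its images under the positive powers of an isometry has an
orthonormal orbit. -/
lemma orbit_orthonormal (T : Ell2 →ₗᵢ[ℂ] Ell2) {k : Ell2} (hk : ‖k‖ = 1)
    (h : ∀ n, inner ℂ k ((T ^ (n + 1)) k) = 0) : Orthonormal ℂ (fun n => (T ^ n) k) := by
  have aux (i d : ℕ) : inner ℂ ((T ^ i) k) ((T ^ (i + (d + 1))) k) = 0 := by
    rw [pow_add T i, LinearIsometry.coe_mul, Function.comp, LinearIsometry.inner_map_map, h]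
  refine ⟨fun n => by rw [LinearIsometry.norm_map, hk], fun i j hij => ?_⟩
  rcases lt_or_gt_of_ne hij with hlt | hlt
  · obtain ⟨d, rfl⟩ := Nat.exists_eq_add_of_lt hlt
    exact aux i d
  · obtain ⟨d, rfl⟩ := Nat.exists_eq_add_of_lt hlt
    exact inner_eq_zero_symm.1 (aux j d)

/-! ### Boundedness of the composition operator -/

lemma ev_kern {w z : ℂ} (hw : ‖w‖ < 1) (hz : ‖z‖ < 1) :
    (1 - (starRingEnd ℂ) w * z) * ev hz (kern hw) = 1 := by
  have h := ev_hasSum hz (kern hw)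
  have h2 : HasSum (fun n => ((starRingEnd ℂ) w * z) ^ n) (1 - (starRingEnd ℂ) w * z)⁻¹ := by
    refine hasSum_geometric_of_norm_lt_one ?_
    rw [norm_mul, RCLike.norm_conj]
    nlinarith [norm_nonneg w, norm_nonneg z]
  have h3 : ev hz (kern hw) = (1 - (starRingEnd ℂ) w * z)⁻¹ :=
    h.unique (by simpa [mul_pow, kern] using h2)
  rw [h3, mul_inv_cancel₀ (one_sub_ne hw hz)]

/-- Composition with `φ_w` is a bounded operator on `H²`. -/
lemma exists_comp {w : ℂ} (hw : ‖w‖ < 1) : ∃ C : Ell2 →L[ℂ] Ell2,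
    ∀ (x : Ell2) (z : ℂ) (hz : ‖z‖ < 1), ev hz (C x) = ev (phi_norm_lt hw hz) x := by
  obtain ⟨T, hT⟩ := exists_mulPhi hw
  have hTn (n : ℕ) (x : Ell2) (z : ℂ) (hz : ‖z‖ < 1) :
      ev hz ((T ^ n) x) = phi w z ^ n * ev hz x := by
    induction n with
    | zero => simp
    | succ n ih => rw [pow_succ', LinearIsometry.coe_mul, Function.comp, hT, ih]; ring
  have hk0 : ‖kern hw‖ ≠ 0 := by
    intro h
    have := ev_kern hw hw
    rw [norm_eq_zero.1 h] at this
    simp at this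
  set N : ℂ := (‖kern hw‖ : ℂ) with hN
  have hN0 : N ≠ 0 := Complex.ofReal_ne_zero.2 hk0
  have hv : Orthonormal ℂ (fun n => (T ^ n) (N⁻¹ • kern hw)) := by
    refine orbit_orthonormal T ?_ fun n => ?_
    · rw [norm_smul, hN]
      simp [hk0]
    · -- `T ^ (n + 1) k_w` vanishes at `w`, because `φ_w(w) = 0`.
      rw [inner_smul_left, ← ev_eq_inner, hTn]
      simp [phi]
  refine ⟨N • (denOp w * (isoOf hv).toContinuousLinearMap), fun x z hz => ?_⟩
  have h1 : ev hz (isoOf hv x) = N⁻¹ * ev hz (kern hw) * ev (phi_norm_lt hw hz) x := by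
    refine ((ev_isoOf hv x hz).congr_terms fun n => ?_).unique
      ((ev_hasSum (phi_norm_lt hw hz) x).mul_left (N⁻¹ * ev hz (kern hw)))
    rw [hTn, map_smul, smul_eq_mul]
    ring
  have h2 : ev hz ((N • (denOp w * (isoOf hv).toContinuousLinearMap)) x) =
      N * ((1 - (starRingEnd ℂ) w * z) * ev hz (isoOf hv x)) := by
    rw [← ev_denOp]
    simp
  rw [h2, h1]
  linear_combination (N * N⁻¹ * ev (phi_norm_lt hw hz) x) * ev_kern hw hz +
    ev (phi_norm_lt hw hz) x * mul_inv_cancel₀ hN0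

lemma coeff_unique {f : ℂ → ℂ} {c d : ℕ → ℂ}
    (hc : ∀ z : ℂ, ‖z‖ < 1 → HasSum (fun n => c n * z ^ n) (f z))
    (hd : ∀ z : ℂ, ‖z‖ < 1 → HasSum (fun n => d n * z ^ n) (f z)) : c = d := by
  have key (c : ℕ → ℂ) (hc : ∀ z : ℂ, ‖z‖ < 1 → HasSum (fun n => c n * z ^ n) (f z)) :
      HasFPowerSeriesAt f (FormalMultilinearSeries.ofScalars ℂ c) 0 := by
    rw [hasFPowerSeriesAt_iff]
    filter_upwards [Metric.ball_mem_nhds (0 : ℂ) one_pos] with z hz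
    simpa [mul_comm] using hc z (by simpa using hz)
  have h := (key c hc).eq_formalMultilinearSeries (key d hd)
  funext n
  simpa using congrArg (fun p => FormalMultilinearSeries.coeff p n) h

/-- Composition with `φ_w` preserves `H²` and is bounded there, in terms of Taylor coefficients. -/
lemma comp_bounded {w : ℂ} (hw : ‖w‖ < 1) :
    (∀ h : ℂ → ℂ, MemH2 h → MemH2 (fun z => h (phi w z))) ∧
    ∃ M : ℝ, 0 ≤ M ∧ ∀ (h : ℂ → ℂ) (c d : ℕ → ℂ), IsH2Rep h c →
      IsH2Rep (fun z => h (phi w z)) d → (∑' n, ‖d n‖ ^ 2) ≤ M * ∑' n, ‖c n‖ ^ 2 := by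
  obtain ⟨C, hC⟩ := exists_comp hw
  have key (h : ℂ → ℂ) (c : ℕ → ℂ) (hc : IsH2Rep h c) :
      IsH2Rep (fun z => h (phi w z)) (C ⟨c, (memlp_two_iff c).2 hc.1⟩) := by
    refine ⟨ell2_summable _, fun z hz => ?_⟩
    have h1 := ev_hasSum hz (C ⟨c, (memlp_two_iff c).2 hc.1⟩)
    rw [hC] at h1
    have h2 := (ev_hasSum (phi_norm_lt hw hz) ⟨c, (memlp_two_iff c).2 hc.1⟩).unique
      (hc.2 _ (phi_norm_lt hw hz))
    rwa [h2] at h1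
  refine ⟨fun h ⟨c, hc⟩ => ⟨_, key h c hc⟩, ‖C‖ ^ 2, by positivity, fun h c d hc hd => ?_⟩
  rw [coeff_unique hd.2 (key h c hc).2, ← ell2_norm_sq]
  have h1 := C.le_opNorm ⟨c, (memlp_two_iff c).2 hc.1⟩
  have h2 := ell2_norm_sq ⟨c, (memlp_two_iff c).2 hc.1⟩
  calc _ ≤ (‖C‖ * ‖(⟨c, (memlp_two_iff c).2 hc.1⟩ : Ell2)‖) ^ 2 := by gcongr
    _ = _ := by rw [mul_pow, h2]

/-! ### The conjugation of `φ_a` to `z ↦ -z` -/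

lemma phi_phi {w z : ℂ} (hw : ‖w‖ < 1) (hz : ‖z‖ < 1) : phi w (phi w z) = z := by
  have h1 := one_sub_ne hw hz
  have h2 : 1 - (starRingEnd ℂ) w * phi w z ≠ 0 := one_sub_ne hw (phi_norm_lt hw hz)
  rw [phi.eq_1 w (phi w z), div_eq_iff h2]
  refine mul_right_cancel₀ h1 ?_
  linear_combination (-1 + z * (starRingEnd ℂ) w) * phi_mul hw hz

/-- The two facts about `w = ω_a` that matter: it lies in the disk and `a = 2w/(1 + |w|²)`. -/
lemma omega_spec {a : ℂ} (ha : ‖a‖ < 1) : ‖omegaPt a‖ < 1 ∧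
    a * (1 + (starRingEnd ℂ) (omegaPt a) * omegaPt a) = 2 * omegaPt a := by
  set s : ℝ := Real.sqrt (1 - ‖a‖ ^ 2) with hs
  have hs0 : 0 ≤ s := Real.sqrt_nonneg _
  have hs2 : s ^ 2 = 1 - ‖a‖ ^ 2 := Real.sq_sqrt (by nlinarith [norm_nonneg a])
  have hs2' : (s : ℂ) ^ 2 = 1 - (starRingEnd ℂ) a * a := by
    rw [Complex.conj_mul']
    exact_mod_cast hs2
  have h1 : (1 + s : ℂ) ≠ 0 := by
    have : (1 + s : ℝ) ≠ 0 := by positivity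
    exact_mod_cast this
  have hω : omegaPt a = a / (1 + s) := by
    by_cases h0 : a = 0
    · simp [omegaPt, h0]
    · have hc : (starRingEnd ℂ) a ≠ 0 := by simpa using h0
      rw [omegaPt, if_neg h0, ← hs, div_eq_div_iff hc h1]
      linear_combination -hs2'
  constructor
  · rw [hω, norm_div]
    have : ‖(1 + s : ℂ)‖ = 1 + s := by
      have h : (1 + s : ℂ) = ((1 + s : ℝ) : ℂ) := by push_cast; rfl
      rw [h, Complex.norm_real, Real.norm_of_nonneg (by positivity)]
    rw [this, div_lt_one (by positivity)]
    linarith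
  · rw [hω, map_div₀, map_add, map_one, Complex.conj_ofReal]
    field_simp
    linear_combination a * hs2'

/-- `φ_ω` conjugates `φ_a` to `z ↦ -z`. -/
lemma phi_omega_phi {a z : ℂ} (ha : ‖a‖ < 1) (hz : ‖z‖ < 1) :
    phi (omegaPt a) (phi a z) = -phi (omegaPt a) z := by
  obtain ⟨hw, h⟩ := omega_spec ha
  set w := omegaPt a
  have h' : (starRingEnd ℂ) a * (1 + (starRingEnd ℂ) w * w) = 2 * (starRingEnd ℂ) w := by
    have := congrArg (starRingEnd ℂ) h
    simpa [mul_comm, Complex.conj_ofNat] using this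
  have hq : 1 + (starRingEnd ℂ) w * w ≠ 0 := by
    rw [Complex.conj_mul']
    have : (1 + ‖w‖ ^ 2 : ℝ) ≠ 0 := by positivity
    exact_mod_cast this
  have h1 := one_sub_ne ha hz
  have h2 := one_sub_ne hw hz
  have h3 := one_sub_ne hw (phi_norm_lt ha hz)
  have key : phi a z * (1 + (starRingEnd ℂ) w * w - 2 * (starRingEnd ℂ) w * z) =
      2 * w - (1 + (starRingEnd ℂ) w * w) * z := by
    linear_combination (1 + (starRingEnd ℂ) w * w) * phi_mul ha hz + h + phi a z * z * h'
  have hd : 1 + (starRingEnd ℂ) w * w - 2 * (starRingEnd ℂ) w * z ≠ 0 := by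
    have : 1 + (starRingEnd ℂ) w * w - 2 * (starRingEnd ℂ) w * z =
        (1 + (starRingEnd ℂ) w * w) * (1 - (starRingEnd ℂ) a * z) := by
      linear_combination z * h'
    rw [this]
    exact mul_ne_zero hq h1
  rw [phi.eq_1 w (phi a z), div_eq_iff h3, phi.eq_1 w z, ← neg_div, div_mul_eq_mul_div, eq_div_iff h2]
  refine mul_right_cancel₀ hd ?_
  linear_combination (-(1 - (starRingEnd ℂ) w * z) - (starRingEnd ℂ) w * (w - z)) * key

lemma phi_omega_neg {a z : ℂ} (ha : ‖a‖ < 1) (hz : ‖z‖ < 1) :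
    phi (omegaPt a) (-z) = phi a (phi (omegaPt a) z) := by
  have hw := (omega_spec ha).1
  have h := phi_omega_phi ha (phi_norm_lt hw hz)
  rw [phi_phi hw hz] at h
  rw [← h, phi_phi hw (phi_norm_lt ha (phi_norm_lt hw hz))]

/-- For `a` in the open unit disk, the (linear) map `h ↦ h ∘ φ_{ω_a}` restricts to a
bounded bijection from the even functions of `H²` onto `N(C_a − 1)`, and from the odd
functions of `H²` onto `N(C_a + 1)`; in both cases the inverse is `f ↦ f ∘ φ_{ω_a}`. -/
theorem stmt6 (a : ℂ) (ha : ‖a‖ < 1) :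
    -- (even case) h ↦ h ∘ φ_{ω_a} maps even H² functions into N(C_a − 1) …
    (∀ h : ℂ → ℂ, MemH2 h → (∀ z : ℂ, ‖z‖ < 1 → h (-z) = h z) →
      MemH2 (fun z => h (phi (omegaPt a) z)) ∧
        ∀ z : ℂ, ‖z‖ < 1 → h (phi (omegaPt a) (phi a z)) = h (phi (omegaPt a) z)) ∧
    -- … surjectively, with inverse f ↦ f ∘ φ_{ω_a} …
    (∀ f : ℂ → ℂ, MemH2 f → (∀ z : ℂ, ‖z‖ < 1 → f (phi a z) = f z) →
      MemH2 (fun z => f (phi (omegaPt a) z)) ∧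
      (∀ z : ℂ, ‖z‖ < 1 → f (phi (omegaPt a) (-z)) = f (phi (omegaPt a) z)) ∧
      (∀ z : ℂ, ‖z‖ < 1 → f (phi (omegaPt a) (phi (omegaPt a) z)) = f z)) ∧
    -- … injectively (as functions on the disk) …
    (∀ h₁ h₂ : ℂ → ℂ, MemH2 h₁ → MemH2 h₂ →
      (∀ z : ℂ, ‖z‖ < 1 → h₁ (-z) = h₁ z) → (∀ z : ℂ, ‖z‖ < 1 → h₂ (-z) = h₂ z) →
      (∀ z : ℂ, ‖z‖ < 1 → h₁ (phi (omegaPt a) z) = h₂ (phi (omegaPt a) z)) →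
      ∀ z : ℂ, ‖z‖ < 1 → h₁ z = h₂ z) ∧
    -- … and boundedly (in the H² norm).
    (∃ M : ℝ, 0 ≤ M ∧ ∀ (h : ℂ → ℂ) (c d : ℕ → ℂ), IsH2Rep h c →
      (∀ z : ℂ, ‖z‖ < 1 → h (-z) = h z) →
      IsH2Rep (fun z => h (phi (omegaPt a) z)) d →
      (∑' n, ‖d n‖ ^ 2) ≤ M * ∑' n, ‖c n‖ ^ 2) ∧
    -- (odd case) h ↦ h ∘ φ_{ω_a} maps odd H² functions into N(C_a + 1) …
    (∀ h : ℂ → ℂ, MemH2 h → (∀ z : ℂ, ‖z‖ < 1 → h (-z) = - h z) →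
      MemH2 (fun z => h (phi (omegaPt a) z)) ∧
        ∀ z : ℂ, ‖z‖ < 1 → h (phi (omegaPt a) (phi a z)) = - h (phi (omegaPt a) z)) ∧
    -- … surjectively, with inverse f ↦ f ∘ φ_{ω_a} …
    (∀ f : ℂ → ℂ, MemH2 f → (∀ z : ℂ, ‖z‖ < 1 → f (phi a z) = - f z) →
      MemH2 (fun z => f (phi (omegaPt a) z)) ∧
      (∀ z : ℂ, ‖z‖ < 1 → f (phi (omegaPt a) (-z)) = - f (phi (omegaPt a) z)) ∧
      (∀ z : ℂ, ‖z‖ < 1 → f (phi (omegaPt a) (phi (omegaPt a) z)) = f z)) ∧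
    -- … injectively (as functions on the disk) …
    (∀ h₁ h₂ : ℂ → ℂ, MemH2 h₁ → MemH2 h₂ →
      (∀ z : ℂ, ‖z‖ < 1 → h₁ (-z) = - h₁ z) → (∀ z : ℂ, ‖z‖ < 1 → h₂ (-z) = - h₂ z) →
      (∀ z : ℂ, ‖z‖ < 1 → h₁ (phi (omegaPt a) z) = h₂ (phi (omegaPt a) z)) →
      ∀ z : ℂ, ‖z‖ < 1 → h₁ z = h₂ z) ∧
    -- … and boundedly (in the H² norm).
    (∃ M : ℝ, 0 ≤ M ∧ ∀ (h : ℂ → ℂ) (c d : ℕ → ℂ), IsH2Rep h c →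
      (∀ z : ℂ, ‖z‖ < 1 → h (-z) = - h z) →
      IsH2Rep (fun z => h (phi (omegaPt a) z)) d →
      (∑' n, ‖d n‖ ^ 2) ≤ M * ∑' n, ‖c n‖ ^ 2) := by
  have hw := (omega_spec ha).1
  obtain ⟨hmem, M, hM, hbd⟩ := comp_bounded hw
  have hinj (h₁ h₂ : ℂ → ℂ)
      (h : ∀ z : ℂ, ‖z‖ < 1 → h₁ (phi (omegaPt a) z) = h₂ (phi (omegaPt a) z)) (z : ℂ)
      (hz : ‖z‖ < 1) : h₁ z = h₂ z := by
    simpa [phi_phi hw hz] using h _ (phi_norm_lt hw hz)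
  refine ⟨fun h hh he => ⟨hmem h hh, fun z hz => ?_⟩,
    fun f hf he => ⟨hmem f hf, fun z hz => ?_, fun z hz => by rw [phi_phi hw hz]⟩,
    fun h₁ h₂ _ _ _ _ h => hinj h₁ h₂ h,
    ⟨M, hM, fun h c d hc _ hd => hbd h c d hc hd⟩,
    fun h hh he => ⟨hmem h hh, fun z hz => ?_⟩,
    fun f hf he => ⟨hmem f hf, fun z hz => ?_, fun z hz => by rw [phi_phi hw hz]⟩,
    fun h₁ h₂ _ _ _ _ h => hinj h₁ h₂ h,
    ⟨M, hM, fun h c d hc _ hd => hbd h c d hc hd⟩⟩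
  · rw [phi_omega_phi ha hz, he _ (phi_norm_lt hw hz)]
  · rw [phi_omega_neg ha hz, he _ (phi_norm_lt hw hz)]
  · rw [phi_omega_phi ha hz, he _ (phi_norm_lt hw hz)]
  · rw [phi_omega_neg ha hz, he _ (phi_norm_lt hw hz)]
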